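/- arXiv:1702.00078 — 2 statements merged into one kernel-verified Lean document; each statement's English description precedes it below -/
import Mathlib

section
/- Fix a bipartite Bell scenario with n Alice inputs, m Bob inputs, and binary outputs, and a Bell expression β(p) = Σ c(a,b,x,y)·p(a,b|x,y) with all |c(a,b,x,y)| ≤ 1. Let β^max be its maximum over bipartite no-signaling boxes, β₁^max its maximum over no-signaling boxes with Bob's observable B₁ (input y = 1) deterministic, and w = β^max − β₁^max. Let p be an initial bipartite no-signaling box and p̃(a,b,g|x,y) a tripartite no-signaling box (Grace has a single input, binary output) implementing a gentle measurement of B₁ with information gain parameter ε ∈ [0,1/2], i.e. (i) p̃(b₁|y=1,a,x) = p(b₁|y=1,a,x) for all a,x with p(a|x) > 0, and (ii) p̃(g = b₁ | b₁, y=1, a, x) = 1/2 + ε if g = b₁ and 1/2 − ε otherwise, for all a,x with positive conditioning probability. Then n·𝒟 ≥ w·(2ε) − (β^max − β(p)), where 𝒟 = Σ_x (1/n) Σ_a p(a|x) Σ_{y ≠ 1} Σ_b |p(b|y,a,x) − p̃(b|y,a,x)| is the average total disturbance computed between p and the Alice–Bob marginal of p̃. -/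
open Finset

/-- The sign `±1` associated with a binary output. -/
def sgn (b : Bool) : ℝ := if b then 1 else -1

/-- A bipartite no-signaling box with binary outputs. -/
def IsNSBox {n m : ℕ} (p : Bool → Bool → Fin n → Fin m → ℝ) : Prop :=
  (∀ a b x y, 0 ≤ p a b x y) ∧
  (∀ x y, ∑ a, ∑ b, p a b x y = 1) ∧
  (∀ a x y y', ∑ b, p a b x y = ∑ b, p a b x y') ∧
  (∀ b y x x', ∑ a, p a b x y = ∑ a, p a b x' y)

/-- A tripartite no-signaling box in which Grace holds a single fixed input. -/
def IsNS3Box {n m : ℕ} (p : Bool → Bool → Bool → Fin n → Fin m → ℝ) : Prop :=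
  (∀ a b g x y, 0 ≤ p a b g x y) ∧
  (∀ x y, ∑ a, ∑ b, ∑ g, p a b g x y = 1) ∧
  (∀ a g x y y', ∑ b, p a b g x y = ∑ b, p a b g x y') ∧
  (∀ b g y x x', ∑ a, p a b g x y = ∑ a, p a b g x' y)

/-- The Bell value `β(p) = Σ c(a,b,x,y)·p(a,b|x,y)` of a bipartite box. -/
def bell {n m : ℕ} (c : Bool → Bool → Fin n → Fin m → ℝ)
    (p : Bool → Bool → Fin n → Fin m → ℝ) : ℝ :=
  ∑ x, ∑ y, ∑ a, ∑ b, c a b x y * p a b x y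

/-- Bob's observable `B₁` (input `y = 1`, i.e. `0 : Fin m`) is deterministic. -/
def DetB1 {n m : ℕ} [NeZero m] (p : Bool → Bool → Fin n → Fin m → ℝ) : Prop :=
  ∃ b0 : Bool, ∀ x b, (∑ a, p a b x 0) = if b = b0 then 1 else 0

/-- The average total disturbance `𝒟` between the initial box `p` and the Alice–Bob marginal
of the tripartite box `pt`, over all of Bob's observables other than `B₁`. -/
noncomputable def disturbance {n m : ℕ} [NeZero m]
    (p : Bool → Bool → Fin n → Fin m → ℝ)
    (pt : Bool → Bool → Bool → Fin n → Fin m → ℝ) : ℝ :=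
  ∑ x, (1 / (n : ℝ)) * ∑ a, (∑ b, p a b x 0) *
    ∑ y ∈ Finset.univ.filter (fun y => y ≠ (0 : Fin m)), ∑ b,
      |p a b x y / (∑ b', p a b' x y) -
        (∑ g, pt a b g x y) / (∑ b', ∑ g, pt a b' g x y)|

/-!
Split the tripartite box along Grace's output `g` into two unnormalized bipartite boxes. Writing a
binary box in terms of its total weight `T`, its one-party means `A x`, `B y` and its correlators
`E x y`, positivity becomes `|A x + B y| - T ≤ E x y ≤ T - |A x - B y|`. Clamping all means to
`[-t, t]` with `t = |B₁|` splits such a box into one of weight `t` on which `B₁` is deterministic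
and one of weight `T - t` on which `B₁` is unbiased, so its Bell value is at most
`T β^max - w |B₁|`. Summing over `g`, the Alice–Bob marginal has Bell value at most
`β^max - w · 2ε`. As that marginal has Alice's original marginal and the original statistics of
`B₁`, its Bell value differs from `β(p)` by at most `n 𝒟`.
-/

section Clamping

theorem abs_sub_add_abs_sub_of_monotone {α β : Type*} [LinearOrder α] [AddCommGroup β]
    [LinearOrder β] [IsOrderedAddMonoid β] {f g : α → β} (hf : Monotone f) (hg : Monotone g)
    (u v : α) : |f u - f v| + |g u - g v| = |(f u + g u) - (f v + g v)| := by
  rw [add_sub_add_comm]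
  refine (abs_add_eq_add_abs_iff _ _ |>.2 ?_).symm
  rcases le_total u v with huv | hvu
  · exact .inr ⟨sub_nonpos.2 (hf huv), sub_nonpos.2 (hg huv)⟩
  · exact .inl ⟨sub_nonneg.2 (hf hvu), sub_nonneg.2 (hg hvu)⟩

theorem exists_add_eq_of_mem_Icc_add {α : Type*} [AddCommGroup α] [LinearOrder α]
    [IsOrderedAddMonoid α] {l₁ u₁ l₂ u₂ e : α} (h₁ : l₁ ≤ u₁) (h₂ : l₂ ≤ u₂)
    (he : e ∈ Set.Icc (l₁ + l₂) (u₁ + u₂)) :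
    ∃ d₁ ∈ Set.Icc l₁ u₁, ∃ d₂ ∈ Set.Icc l₂ u₂, d₁ + d₂ = e := by
  refine ⟨max l₁ (e - u₂), ⟨le_max_left _ _, max_le h₁ (sub_le_iff_le_add.2 he.2)⟩,
    e - max l₁ (e - u₂), ⟨le_sub_comm.1 (max_le ?_ ?_), sub_le_comm.1 (le_max_right _ _)⟩,
    add_sub_cancel _ _⟩
  · exact le_sub_iff_add_le.2 he.1
  · exact sub_le_sub_left h₂ e

/-- The projection of `u` to the interval `[-t, t]`, meaningful for `0 ≤ t`. -/
def symmClamp (t u : ℝ) : ℝ := max (-t) (min t u)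

theorem monotone_symmClamp (t : ℝ) : Monotone (symmClamp t) :=
  fun _ _ h => max_le_max_left _ (min_le_min_left _ h)

theorem monotone_sub_symmClamp (t : ℝ) : Monotone fun u => u - symmClamp t u := by
  intro u v huv
  simp only [symmClamp]
  grind

theorem symmClamp_neg {t : ℝ} (ht : 0 ≤ t) (u : ℝ) : symmClamp t (-u) = -symmClamp t u := by
  simp only [symmClamp]
  grind

theorem abs_symmClamp_le {t : ℝ} (ht : 0 ≤ t) (u : ℝ) : |symmClamp t u| ≤ t :=
  abs_le.2 ⟨le_max_left _ _, max_le (by linarith) (min_le_left _ _)⟩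

theorem abs_sub_symmClamp_le {t T u : ℝ} (htT : t ≤ T) (hu : |u| ≤ T) :
    |u - symmClamp t u| ≤ T - t := by
  simp only [symmClamp]
  grind

theorem symmClamp_abs_self (u : ℝ) : symmClamp |u| u = u := by
  rw [symmClamp, min_eq_right (le_abs_self u), max_eq_right (neg_abs_le u)]

end Clamping

section CorrelatorRange

/-- The values of the correlator allowed by positivity for a pair of binary outputs of total weight
`T` with means `u` and `v`. -/
def correlatorRange (T u v : ℝ) : Set ℝ := Set.Icc (|u + v| - T) (T - |u - v|)

theorem correlatorRange_nonempty {T u v : ℝ} (hu : |u| ≤ T) (hv : |v| ≤ T) :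
    (correlatorRange T u v).Nonempty :=
  Set.nonempty_Icc.2 (by grind)

theorem abs_le_of_mem_correlatorRange {T u v e : ℝ} (he : e ∈ correlatorRange T u v) :
    |u| ≤ T ∧ |v| ≤ T := by
  have := he.1.trans he.2
  grind

/-- Clamping and its residual are both monotone and odd, so they split `|u - v|` and `|u + v|`
additively; hence the range at `T` is the Minkowski sum of those at `t` and `T - t`. -/
theorem exists_add_eq_of_mem_correlatorRange {t T u v e : ℝ} (ht : 0 ≤ t) (htT : t ≤ T)
    (he : e ∈ correlatorRange T u v) :
    ∃ d ∈ correlatorRange t (symmClamp t u) (symmClamp t v),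
      ∃ d' ∈ correlatorRange (T - t) (u - symmClamp t u) (v - symmClamp t v), d + d' = e := by
  obtain ⟨hu, hv⟩ := abs_le_of_mem_correlatorRange he
  have abs_sub_split (v : ℝ) : |symmClamp t u - symmClamp t v| +
      |(u - symmClamp t u) - (v - symmClamp t v)| = |u - v| := by
    simpa only [add_sub_cancel] using
      abs_sub_add_abs_sub_of_monotone (monotone_symmClamp t) (monotone_sub_symmClamp t) u v
  have abs_add_split : |symmClamp t u + symmClamp t v| +
      |(u - symmClamp t u) + (v - symmClamp t v)| = |u + v| := by
    have h := abs_sub_split (-v)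
    rwa [symmClamp_neg ht, ← neg_sub', sub_neg_eq_add, sub_neg_eq_add, sub_neg_eq_add] at h
  refine exists_add_eq_of_mem_Icc_add
    (Set.nonempty_Icc.1 <|
      correlatorRange_nonempty (abs_symmClamp_le ht u) (abs_symmClamp_le ht v))
    (Set.nonempty_Icc.1 <|
      correlatorRange_nonempty (abs_sub_symmClamp_le htT hu) (abs_sub_symmClamp_le htT hv))
    ⟨?_, ?_⟩
  · linarith [he.1]
  · linarith [he.2, abs_sub_split v]

end CorrelatorRange

section WeightedBoxes

variable {n m : ℕ}

/-- An unnormalized bipartite no-signaling box of total weight `T`, such as the part of a tripartite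
box on which Grace obtains a given output. -/
def IsWeightedNSBox (T : ℝ) (p : Bool → Bool → Fin n → Fin m → ℝ) : Prop :=
  (∀ a b x y, 0 ≤ p a b x y) ∧
  (∀ x y, ∑ a, ∑ b, p a b x y = T) ∧
  (∀ a x y y', ∑ b, p a b x y = ∑ b, p a b x y') ∧
  (∀ b y x x', ∑ a, p a b x y = ∑ a, p a b x' y)

/-- The (unnormalized) mean of Bob's observable `B₁`, read off at Alice's input `0`; by no-signaling
that choice is immaterial. -/
def bobMean [NeZero n] [NeZero m] (p : Bool → Bool → Fin n → Fin m → ℝ) : ℝ :=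
  ∑ a, ∑ b, sgn b * p a b 0 0

theorem bell_add (c p q : Bool → Bool → Fin n → Fin m → ℝ) :
    bell c (p + q) = bell c p + bell c q := by
  simp only [bell, Pi.add_apply, mul_add, sum_add_distrib]

theorem bell_smul (c : Bool → Bool → Fin n → Fin m → ℝ) (k : ℝ)
    (p : Bool → Bool → Fin n → Fin m → ℝ) : bell c (k • p) = k * bell c p := by
  simp only [bell, Pi.smul_apply, smul_eq_mul, mul_sum, mul_left_comm]

theorem bobMean_smul [NeZero n] [NeZero m] (k : ℝ) (p : Bool → Bool → Fin n → Fin m → ℝ) :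
    bobMean (k • p) = k * bobMean p := by
  simp only [bobMean, Pi.smul_apply, smul_eq_mul, mul_sum, mul_left_comm]

variable {T : ℝ} {p : Bool → Bool → Fin n → Fin m → ℝ}

theorem IsWeightedNSBox.weight_nonneg [NeZero n] [NeZero m] (hp : IsWeightedNSBox T p) : 0 ≤ T :=
  hp.2.1 0 0 ▸ sum_nonneg fun a _ => sum_nonneg fun b _ => hp.1 a b 0 0

theorem IsWeightedNSBox.eq_zero (hp : IsWeightedNSBox 0 p) : p = 0 := by
  funext a b x y
  have nonneg a : 0 ≤ ∑ b, p a b x y := sum_nonneg fun b _ => hp.1 a b x y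
  have marginal_eq_zero : ∑ b, p a b x y = 0 :=
    (sum_eq_zero_iff_of_nonneg fun a _ => nonneg a).1 (hp.2.1 x y) a (mem_univ a)
  exact (sum_eq_zero_iff_of_nonneg fun b _ => hp.1 a b x y).1 marginal_eq_zero b (mem_univ b)

theorem IsWeightedNSBox.isNSBox_inv_smul (hT : 0 < T) (hp : IsWeightedNSBox T p) :
    IsNSBox (T⁻¹ • p) := by
  obtain ⟨nonneg, total, alice, bob⟩ := hp
  simp only [IsNSBox, Pi.smul_apply, smul_eq_mul, ← mul_sum, total, inv_mul_cancel₀ hT.ne']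
  exact ⟨fun a b x y => mul_nonneg (inv_nonneg.2 hT.le) (nonneg a b x y), fun _ _ => trivial,
    fun a x y y' => by rw [alice a x y y'], fun b y x x' => by rw [bob b y x x']⟩

theorem IsNSBox.detB1_of_abs_bobMean_eq_one [NeZero n] [NeZero m] (hp : IsNSBox p)
    (h : |bobMean p| = 1) : DetB1 p := by
  obtain ⟨-, total, -, bob⟩ := hp
  have sum_eq : ∑ a, p a true 0 0 + ∑ a, p a false 0 0 = 1 :=
    (Fintype.sum_bool fun b => ∑ a, p a b 0 0).symm.trans (sum_comm.trans (total 0 0))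
  have sub_eq : ∑ a, p a true 0 0 - ∑ a, p a false 0 0 = bobMean p := by
    simp only [bobMean, sgn, Fintype.sum_bool, if_true, Bool.false_eq_true, if_false]
    ring
  rcases eq_or_eq_neg_of_abs_eq h with h | h
  · refine ⟨true, fun x b => (bob b 0 x 0).trans ?_⟩
    cases b <;> simp only [if_true, Bool.false_eq_true, if_false] <;> linarith
  · refine ⟨false, fun x b => (bob b 0 x 0).trans ?_⟩
    cases b <;> simp only [if_true, Bool.true_eq_false, if_false] <;> linarith

theorem IsWeightedNSBox.bell_le_of_bell_inv_smul_le [NeZero n] [NeZero m]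
    (hp : IsWeightedNSBox T p) {c : Bool → Bool → Fin n → Fin m → ℝ} {M : ℝ}
    (hM : 0 < T → bell c (T⁻¹ • p) ≤ M) : bell c p ≤ T * M := by
  rcases hp.weight_nonneg.eq_or_lt with rfl | hT
  · simp [hp.eq_zero, bell]
  · have h := hM hT
    rwa [bell_smul, inv_mul_le_iff₀ hT] at h

end WeightedBoxes

section CorrelatorBoxes

variable {n m : ℕ}

/-- The box with binary outputs of total weight `T` whose means are `A x` and `B y` and whose
correlators are `E x y`. -/
noncomputable def correlatorBox (T : ℝ) (A : Fin n → ℝ) (B : Fin m → ℝ) (E : Fin n → Fin m → ℝ) :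
    Bool → Bool → Fin n → Fin m → ℝ :=
  fun a b x y => (T + sgn a * A x + sgn b * B y + sgn a * sgn b * E x y) / 4

theorem correlatorBox_add (T T' : ℝ) (A A' : Fin n → ℝ) (B B' : Fin m → ℝ)
    (E E' : Fin n → Fin m → ℝ) :
    correlatorBox (T + T') (A + A') (B + B') (E + E') =
      correlatorBox T A B E + correlatorBox T' A' B' E' := by
  funext a b x y
  simp only [correlatorBox, Pi.add_apply]
  ring

theorem bobMean_correlatorBox [NeZero n] [NeZero m] (T : ℝ) (A : Fin n → ℝ) (B : Fin m → ℝ)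
    (E : Fin n → Fin m → ℝ) : bobMean (correlatorBox T A B E) = B 0 := by
  simp only [bobMean, correlatorBox, sgn, Fintype.sum_bool, if_true, Bool.false_eq_true, if_false]
  ring

theorem correlatorBox_nonneg_iff {T : ℝ} {A : Fin n → ℝ} {B : Fin m → ℝ}
    {E : Fin n → Fin m → ℝ} (x : Fin n) (y : Fin m) :
    (∀ a b, 0 ≤ correlatorBox T A B E a b x y) ↔ E x y ∈ correlatorRange T (A x) (B y) := by
  simp only [Bool.forall_bool, correlatorBox, sgn, correlatorRange, Set.mem_Icc, if_true,
    Bool.false_eq_true, if_false]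
  rw [sub_le_iff_le_add, abs_le, le_sub_comm, abs_le]
  constructor
  · rintro ⟨⟨_, _⟩, _, _⟩
    refine ⟨⟨?_, ?_⟩, ?_, ?_⟩ <;> linarith
  · rintro ⟨⟨_, _⟩, _, _⟩
    refine ⟨⟨?_, ?_⟩, ?_, ?_⟩ <;> linarith

theorem isWeightedNSBox_correlatorBox {T : ℝ} {A : Fin n → ℝ} {B : Fin m → ℝ}
    {E : Fin n → Fin m → ℝ} (hE : ∀ x y, E x y ∈ correlatorRange T (A x) (B y)) :
    IsWeightedNSBox T (correlatorBox T A B E) := by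
  refine ⟨fun a b x y => (correlatorBox_nonneg_iff x y).2 (hE x y) a b, ?_, ?_, ?_⟩
  all_goals
    simp only [correlatorBox, sgn, Fintype.sum_bool, if_true, Bool.false_eq_true, if_false]
    intros
    ring

theorem IsWeightedNSBox.exists_eq_correlatorBox [NeZero n] [NeZero m] {T : ℝ}
    {p : Bool → Bool → Fin n → Fin m → ℝ} (hp : IsWeightedNSBox T p) :
    ∃ A B E, p = correlatorBox T A B E := by
  obtain ⟨-, total, alice, bob⟩ := hp
  refine ⟨fun x => ∑ a, ∑ b, sgn a * p a b x 0, fun y => ∑ a, ∑ b, sgn b * p a b 0 y,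
    fun x y => ∑ a, ∑ b, sgn a * sgn b * p a b x y, ?_⟩
  funext a b x y
  simp only [Fintype.sum_bool, correlatorBox, sgn, if_true, Bool.false_eq_true, if_false]
    at total alice bob ⊢
  cases a <;> cases b <;>
    simp only [if_true, Bool.false_eq_true, if_false] <;>
    linarith [total x y, alice true x y 0, alice false x y 0, bob true y x 0, bob false y x 0]

/-- A total weight equal to the absolute mean of `B₁` makes `B₁` deterministic in `q`, and then `B₁`
is unbiased in `r`. -/
theorem IsWeightedNSBox.exists_eq_add_isWeightedNSBox_abs_bobMean [NeZero n] [NeZero m] {T : ℝ}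
    {p : Bool → Bool → Fin n → Fin m → ℝ} (hp : IsWeightedNSBox T p) :
    ∃ q r, p = q + r ∧ bobMean q = bobMean p ∧
      IsWeightedNSBox |bobMean p| q ∧ IsWeightedNSBox (T - |bobMean p|) r := by
  obtain ⟨A, B, E, rfl⟩ := hp.exists_eq_correlatorBox
  have hE x y : E x y ∈ correlatorRange T (A x) (B y) :=
    (correlatorBox_nonneg_iff x y).1 fun a b => hp.1 a b x y
  rw [bobMean_correlatorBox]
  set t := |B 0|
  have htT : t ≤ T := (abs_le_of_mem_correlatorRange (hE 0 0)).2
  choose D hD D' hD' hDD' using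
    fun x y => exists_add_eq_of_mem_correlatorRange (abs_nonneg (B 0)) htT (hE x y)
  refine ⟨correlatorBox t (fun x => symmClamp t (A x)) (fun y => symmClamp t (B y)) D,
    correlatorBox (T - t) (fun x => A x - symmClamp t (A x)) (fun y => B y - symmClamp t (B y)) D',
    ?_, ?_, isWeightedNSBox_correlatorBox hD, isWeightedNSBox_correlatorBox hD'⟩
  · rw [← correlatorBox_add]
    congr 1
    · exact (add_sub_cancel _ _).symm
    · exact funext fun x => (add_sub_cancel _ _).symm
    · exact funext fun y => (add_sub_cancel _ _).symm
    · exact funext₂ fun x y => (hDD' x y).symm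
  · rw [bobMean_correlatorBox, symmClamp_abs_self]

theorem IsWeightedNSBox.bell_le_sub_abs_bobMean [NeZero n] [NeZero m] {T : ℝ}
    {p : Bool → Bool → Fin n → Fin m → ℝ} (hp : IsWeightedNSBox T p)
    {c : Bool → Bool → Fin n → Fin m → ℝ} {M M₁ : ℝ} (hM : ∀ q, IsNSBox q → bell c q ≤ M)
    (hM₁ : ∀ q, IsNSBox q → DetB1 q → bell c q ≤ M₁) :
    bell c p ≤ T * M - (M - M₁) * |bobMean p| := by
  obtain ⟨q, r, hpqr, hmean, hq, hr⟩ := hp.exists_eq_add_isWeightedNSBox_abs_bobMean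
  have bell_q_le : bell c q ≤ |bobMean p| * M₁ :=
    hq.bell_le_of_bell_inv_smul_le fun hpos =>
      have hNS := hq.isNSBox_inv_smul hpos
      hM₁ _ hNS <| hNS.detB1_of_abs_bobMean_eq_one <| by
        rw [bobMean_smul, hmean, abs_mul, abs_inv, abs_abs, inv_mul_cancel₀ hpos.ne']
  have bell_r_le : bell c r ≤ (T - |bobMean p|) * M :=
    hr.bell_le_of_bell_inv_smul_le fun hpos => hM _ (hr.isNSBox_inv_smul hpos)
  calc bell c p = bell c q + bell c r := by rw [hpqr, bell_add]
    _ ≤ |bobMean p| * M₁ + (T - |bobMean p|) * M := add_le_add bell_q_le bell_r_le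
    _ = T * M - (M - M₁) * |bobMean p| := by ring

end CorrelatorBoxes

section TripartiteBoxes

variable {n m : ℕ}

/-- The unnormalized Alice–Bob box on the event that Grace's output is `g`. -/
def graceBranch (pt : Bool → Bool → Bool → Fin n → Fin m → ℝ) (g : Bool) :
    Bool → Bool → Fin n → Fin m → ℝ :=
  fun a b x y => pt a b g x y

/-- The Alice–Bob marginal of a tripartite box. -/
def aliceBobMarginal (pt : Bool → Bool → Bool → Fin n → Fin m → ℝ) :
    Bool → Bool → Fin n → Fin m → ℝ :=
  fun a b x y => ∑ g, pt a b g x y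

/-- The correlator between Grace's output and Bob's output of `B₁`, read off at Alice's input `0`
like `bobMean`. -/
def graceBobCorrelator [NeZero n] [NeZero m]
    (pt : Bool → Bool → Bool → Fin n → Fin m → ℝ) : ℝ :=
  ∑ g, sgn g * bobMean (graceBranch pt g)

variable {pt : Bool → Bool → Bool → Fin n → Fin m → ℝ}

theorem aliceBobMarginal_eq_sum_graceBranch (pt : Bool → Bool → Bool → Fin n → Fin m → ℝ) :
    aliceBobMarginal pt = graceBranch pt true + graceBranch pt false := by
  funext a b x y
  exact Fintype.sum_bool _

theorem IsNS3Box.isNSBox_aliceBobMarginal (hpt : IsNS3Box pt) :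
    IsNSBox (aliceBobMarginal pt) := by
  obtain ⟨nonneg, total, alice, bob⟩ := hpt
  refine ⟨fun a b x y => sum_nonneg fun g _ => nonneg a b g x y, total, fun a x y y' => ?_,
    fun b y x x' => ?_⟩
  · simp only [aliceBobMarginal]
    rw [sum_comm, sum_comm (f := fun b g => pt a b g x y')]
    exact sum_congr rfl fun g _ => alice a g x y y'
  · simp only [aliceBobMarginal]
    rw [sum_comm, sum_comm (f := fun a g => pt a b g x' y)]
    exact sum_congr rfl fun g _ => bob b g y x x'

theorem IsNS3Box.isWeightedNSBox_graceBranch [NeZero n] [NeZero m] (hpt : IsNS3Box pt)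
    (g : Bool) :
    IsWeightedNSBox (∑ a, ∑ b, pt a b g 0 0) (graceBranch pt g) := by
  obtain ⟨nonneg, -, alice, bob⟩ := hpt
  refine ⟨fun a b => nonneg a b g, fun x y => ?_, fun a => alice a g, fun b => bob b g⟩
  calc ∑ a, ∑ b, pt a b g x y = ∑ a, ∑ b, pt a b g x 0 := sum_congr rfl fun a _ => alice a g x y 0
    _ = ∑ b, ∑ a, pt a b g x 0 := sum_comm
    _ = ∑ b, ∑ a, pt a b g 0 0 := sum_congr rfl fun b _ => bob b g 0 x 0
    _ = ∑ a, ∑ b, pt a b g 0 0 := sum_comm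

theorem sgn_mul_le_abs (g : Bool) (u : ℝ) : sgn g * u ≤ |u| := by
  cases g
  · simpa [sgn] using neg_le_abs u
  · simpa [sgn] using le_abs_self u

theorem IsNS3Box.bell_aliceBobMarginal_le [NeZero n] [NeZero m] (hpt : IsNS3Box pt)
    {c : Bool → Bool → Fin n → Fin m → ℝ} {M M₁ : ℝ} (hM : ∀ q, IsNSBox q → bell c q ≤ M)
    (hM₁ : ∀ q, IsNSBox q → DetB1 q → bell c q ≤ M₁) (hM₁M : M₁ ≤ M) :
    bell c (aliceBobMarginal pt) ≤ M - (M - M₁) * graceBobCorrelator pt := by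
  have bell_branch_le (g : Bool) : bell c (graceBranch pt g) ≤
      (∑ a, ∑ b, pt a b g 0 0) * M - (M - M₁) * (sgn g * bobMean (graceBranch pt g)) :=
    ((hpt.isWeightedNSBox_graceBranch g).bell_le_sub_abs_bobMean hM hM₁).trans <|
      sub_le_sub_left
        (mul_le_mul_of_nonneg_left (sgn_mul_le_abs g _) (sub_nonneg.2 hM₁M)) _
  have total : (∑ g, ∑ a, ∑ b, pt a b g 0 0) = 1 := by
    rw [← hpt.2.1 0 0, sum_comm]
    exact sum_congr rfl fun a _ => sum_comm
  calc bell c (aliceBobMarginal pt) = ∑ g, bell c (graceBranch pt g) := by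
        rw [aliceBobMarginal_eq_sum_graceBranch, bell_add, Fintype.sum_bool]
    _ ≤ ∑ g, ((∑ a, ∑ b, pt a b g 0 0) * M - (M - M₁) * (sgn g * bobMean (graceBranch pt g))) :=
        sum_le_sum fun g _ => bell_branch_le g
    _ = M - (M - M₁) * graceBobCorrelator pt := by
        rw [sum_sub_distrib, ← sum_mul, ← mul_sum, total, one_mul, graceBobCorrelator]

theorem IsNS3Box.graceBobCorrelator_eq [NeZero n] [NeZero m] (hpt : IsNS3Box pt) {ε : ℝ}
    (hgain : ∀ a b, 0 < (∑ g, pt a b g 0 0) → ∀ g,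
      pt a b g 0 0 / (∑ g', pt a b g' 0 0) = if g = b then 1 / 2 + ε else 1 / 2 - ε) :
    graceBobCorrelator pt = 2 * ε := by
  have correlator_of_outputs (a b : Bool) :
      ∑ g, sgn g * (sgn b * pt a b g 0 0) = 2 * ε * ∑ g, pt a b g 0 0 := by
    have nonneg (g : Bool) : 0 ≤ pt a b g 0 0 := hpt.1 a b g 0 0
    rcases (sum_nonneg fun g _ => nonneg g : 0 ≤ ∑ g, pt a b g 0 0).eq_or_lt with h | h
    · have branch_eq_zero (g : Bool) : pt a b g 0 0 = 0 :=
        (sum_eq_zero_iff_of_nonneg fun g _ => nonneg g).1 h.symm g (mem_univ g)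
      simp [branch_eq_zero]
    · have branch_eq (g : Bool) := (div_eq_iff h.ne').1 (hgain a b h g)
      rw [Fintype.sum_bool, branch_eq true, branch_eq false]
      cases b <;>
        simp only [sgn, if_true, Bool.false_eq_true, Bool.true_eq_false, if_false] <;>
        ring
  calc graceBobCorrelator pt = ∑ a, ∑ b, ∑ g, sgn g * (sgn b * pt a b g 0 0) := by
        simp only [graceBobCorrelator, bobMean, graceBranch, mul_sum]
        rw [sum_comm]
        exact sum_congr rfl fun a _ => sum_comm
    _ = 2 * ε * ∑ a, ∑ b, ∑ g, pt a b g 0 0 := by simp only [correlator_of_outputs, mul_sum]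
    _ = 2 * ε := by rw [hpt.2.1, mul_one]

end TripartiteBoxes

section Disturbance

theorem sum_mul_abs_div_sum_sub_div_sum {ι : Type*} [Fintype ι] {f g : ι → ℝ} (hf : 0 ≤ f)
    (hg : 0 ≤ g) (hfg : ∑ i, g i = ∑ i, f i) (i : ι) :
    (∑ j, f j) * |f i / ∑ j, f j - g i / ∑ j, g j| = |f i - g i| := by
  rw [hfg, ← sub_div]
  rcases (sum_nonneg fun j _ => hf j : 0 ≤ ∑ j, f j).eq_or_lt with h | h
  · have hfi : f i = 0 := (sum_eq_zero_iff_of_nonneg fun j _ => hf j).1 h.symm i (mem_univ i)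
    have hgi : g i = 0 :=
      (sum_eq_zero_iff_of_nonneg fun j _ => hg j).1 (hfg.trans h.symm) i (mem_univ i)
    simp [hfi, hgi]
  · rw [abs_div, abs_of_pos h, mul_div_cancel₀ _ h.ne']

theorem eq_of_div_sum_eq_div_sum {ι : Type*} [Fintype ι] {f g : ι → ℝ} (hf : 0 ≤ f)
    (hg : 0 ≤ g) (hfg : ∑ i, g i = ∑ i, f i)
    (h : 0 < ∑ i, f i → ∀ i, f i / ∑ j, f j = g i / ∑ j, g j) : f = g := by
  funext i
  rw [← sub_eq_zero, ← abs_eq_zero, ← sum_mul_abs_div_sum_sub_div_sum hf hg hfg, mul_eq_zero,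
    abs_eq_zero, sub_eq_zero]
  rcases (sum_nonneg fun j _ => hf j : 0 ≤ ∑ j, f j).eq_or_lt with h0 | hpos
  · exact .inl h0.symm
  · exact .inr (h hpos i)

variable {n m : ℕ} [NeZero m] {p q : Bool → Bool → Fin n → Fin m → ℝ}

theorem bell_sub_bell_le_sum_abs_sub {c : Bool → Bool → Fin n → Fin m → ℝ}
    (hc : ∀ a b x y, |c a b x y| ≤ 1) (hB₁ : ∀ a b x, p a b x 0 = q a b x 0) :
    bell c p - bell c q ≤ ∑ x, ∑ a, ∑ y with y ≠ 0, ∑ b, |p a b x y - q a b x y| := by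
  have coeff_mul_le (a b x y) : c a b x y * (p a b x y - q a b x y) ≤ |p a b x y - q a b x y| :=
    (le_abs_self _).trans <| (abs_mul _ _).trans_le <|
      mul_le_of_le_one_left (abs_nonneg _) (hc a b x y)
  calc bell c p - bell c q
      = ∑ x, ∑ a, ∑ y, ∑ b, c a b x y * (p a b x y - q a b x y) := by
        simp only [bell, ← sum_sub_distrib, ← mul_sub]
        exact sum_congr rfl fun x _ => sum_comm
    _ ≤ ∑ x, ∑ a, ∑ y, ∑ b, |p a b x y - q a b x y| := by
        gcongr
        exact coeff_mul_le ..
    _ = ∑ x, ∑ a, ∑ y with y ≠ 0, ∑ b, |p a b x y - q a b x y| := by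
        refine sum_congr rfl fun x _ => sum_congr rfl fun a _ => (sum_filter_of_ne ?_).symm
        rintro y - hy rfl
        simp [hB₁] at hy

theorem IsNSBox.mul_disturbance_eq [NeZero n] (hp : IsNSBox p)
    {pt : Bool → Bool → Bool → Fin n → Fin m → ℝ} (hpt : IsNSBox (aliceBobMarginal pt))
    (hA : ∀ a x, ∑ b, aliceBobMarginal pt a b x 0 = ∑ b, p a b x 0) :
    n * disturbance p pt =
      ∑ x, ∑ a, ∑ y with y ≠ 0, ∑ b, |p a b x y - aliceBobMarginal pt a b x y| := by
  have alice_marginal_eq (a x y) : ∑ b, aliceBobMarginal pt a b x y = ∑ b, p a b x y := by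
    rw [hpt.2.2.1 a x y 0, hA, hp.2.2.1 a x y 0]
  rw [disturbance, ← mul_sum, ← mul_assoc, mul_one_div_cancel (NeZero.ne _), one_mul]
  simp only [mul_sum]
  refine sum_congr rfl fun x _ => sum_congr rfl fun a _ => sum_congr rfl fun y _ =>
    sum_congr rfl fun b _ => ?_
  rw [hp.2.2.1 a x 0 y]
  exact sum_mul_abs_div_sum_sub_div_sum (fun b => hp.1 a b x y) (fun b => hpt.1 a b x y)
    (alice_marginal_eq a x y) b

end Disturbance

/-- The information gain versus disturbance trade-off `n·𝒟 ≥ w·(2ε) − (β^max − β(p))`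
for a gentle measurement of Bob's observable `B₁` with information gain `ε`:
(i) the gentle measurement leaves the sharp conditional statistics of `B₁` unchanged,
(ii) Grace's output agrees with Bob's output at `y = 1` with probability `1/2 + ε`,
and (being an operation on Bob's side) it leaves Alice's marginal unchanged. -/
theorem gain_disturbance_tradeoff {n m : ℕ} [NeZero n] [NeZero m]
    (c : Bool → Bool → Fin n → Fin m → ℝ) (hc : ∀ a b x y, |c a b x y| ≤ 1)
    (βmax β1max : ℝ)
    (hmax : IsGreatest {v : ℝ | ∃ q, IsNSBox q ∧ v = bell c q} βmax)
    (h1max : IsGreatest {v : ℝ | ∃ q, IsNSBox q ∧ DetB1 q ∧ v = bell c q} β1max)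
    (ε : ℝ) (hε : ε ∈ Set.Icc (0 : ℝ) (1/2))
    (p : Bool → Bool → Fin n → Fin m → ℝ) (hp : IsNSBox p)
    (pt : Bool → Bool → Bool → Fin n → Fin m → ℝ) (hpt : IsNS3Box pt)
    (hA : ∀ a x, (∑ b, ∑ g, pt a b g x 0) = ∑ b, p a b x 0)
    (hi : ∀ a x, 0 < (∑ b, p a b x 0) → ∀ b,
      (∑ g, pt a b g x 0) / (∑ b', ∑ g, pt a b' g x 0) =
        p a b x 0 / (∑ b', p a b' x 0))
    (hii : ∀ a x b, 0 < (∑ g, pt a b g x 0) → ∀ g,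
      pt a b g x 0 / (∑ g', pt a b g' x 0) =
        if g = b then 1/2 + ε else 1/2 - ε) :
    (n : ℝ) * disturbance p pt ≥
      (βmax - β1max) * (2 * ε) - (βmax - bell c p) := by
  have bell_le (q) (hq : IsNSBox q) : bell c q ≤ βmax := hmax.2 ⟨q, hq, rfl⟩
  have bell_le_of_det (q) (hq : IsNSBox q) (hdet : DetB1 q) : bell c q ≤ β1max :=
    h1max.2 ⟨q, hq, hdet, rfl⟩
  have β1max_le : β1max ≤ βmax := h1max.mono hmax fun _ ⟨q, hq, _, hv⟩ => ⟨q, hq, hv⟩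
  have hmarg := hpt.isNSBox_aliceBobMarginal
  have B₁_undisturbed (a b x) : p a b x 0 = aliceBobMarginal pt a b x 0 :=
    congrFun (eq_of_div_sum_eq_div_sum (fun b => hp.1 a b x 0) (fun b => hmarg.1 a b x 0)
      (hA a x) fun hpos b => (hi a x hpos b).symm) b
  have correlator : graceBobCorrelator pt = 2 * ε := hpt.graceBobCorrelator_eq fun a b => hii a 0 b
  have bell_marginal_le := hpt.bell_aliceBobMarginal_le bell_le bell_le_of_det β1max_le
  have bell_sub_le := bell_sub_bell_le_sum_abs_sub hc B₁_undisturbed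
  rw [← hp.mul_disturbance_eq hmarg hA] at bell_sub_le
  rw [correlator] at bell_marginal_le
  linarith
end

section
/- Consider the CHSH scenario: Alice and Bob each have two inputs and binary ±1 outputs. Let p be a bipartite no-signaling box with CHSH value β_CHSH(p) = ⟨A₁B₁⟩ + ⟨A₁B₂⟩ + ⟨A₂B₁⟩ − ⟨A₂B₂⟩, and let p̃(a,b,g|x,y) be a tripartite no-signaling box (Grace has a single input, binary output) implementing a gentle measurement of Bob's observable B₁ with parameter ε ∈ [0,1/2], i.e. p̃(b₁|y=1,a,x) = p(b₁|y=1,a,x) and p̃(g = b₁|b₁,y=1,a,x) = 1/2 + ε if g = b₁, 1/2 − ε otherwise (for all a,x with positive conditioning probability). Then the disturbance of Bob's second observable, D(B₂) = Σ_{x=1,2} (1/2) Σ_a p(a|x) Σ_b |p(b|y=2,a,x) − p̃(b|y=2,a,x)|, satisfies D(B₂) ≥ 2ε − (1/2)(4 − β_CHSH(p)). -/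
open Finset

/-- The correlator `⟨A_x B_y⟩` of a bipartite box with binary `±1` outputs. -/
def corr {n m : ℕ} (p : Bool → Bool → Fin n → Fin m → ℝ)
    (x : Fin n) (y : Fin m) : ℝ :=
  ∑ a, ∑ b, sgn a * sgn b * p a b x y

/-- The CHSH quantity `⟨A₁B₁⟩ + ⟨A₁B₂⟩ + ⟨A₂B₁⟩ − ⟨A₂B₂⟩`. -/
def chsh (p : Bool → Bool → Fin 2 → Fin 2 → ℝ) : ℝ :=
  corr p 0 0 + corr p 0 1 + corr p 1 0 - corr p 1 1

/-!
Once Alice's output is ignored, Grace's output and that of Bob's second observable have a joint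
distribution that does not depend on Alice's input, so letting Grace answer in place of `B₁` gives
a local CHSH strategy, of value at most `2`. In this strategy the correlators of `B₁` are those of
`p` scaled by `2ε`. Restoring them costs at most `2 - 4ε`, and replacing the correlators of the
disturbed `B₂` by the original ones costs at most `2 D(B₂)`. Hence `β_CHSH(p) ≤ 4 - 4ε + 2 D(B₂)`.
-/

section Conditional

variable {ι : Type*} [Fintype ι] {u v : ι → ℝ}

theorem div_sum_mul_sum (hu : ∀ i, 0 ≤ u i) (i : ι) : u i / (∑ j, u j) * ∑ j, u j = u i :=
  div_mul_cancel_of_imp fun h ↦ congrFun ((Fintype.sum_eq_zero_iff_of_nonneg hu).1 h) i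

theorem eq_mul_sum_of_div_sum_eq (hu : ∀ i, 0 ≤ u i) {c : ι → ℝ}
    (h : 0 < ∑ i, u i → ∀ i, u i / ∑ j, u j = c i) (i : ι) : u i = c i * ∑ j, u j := by
  rcases (sum_nonneg fun j _ ↦ hu j).eq_or_lt with hzero | hpos
  · rw [← hzero, mul_zero]
    exact congrFun ((Fintype.sum_eq_zero_iff_of_nonneg hu).1 hzero.symm) i
  · rw [← h hpos i, div_sum_mul_sum hu]

theorem sum_mul_sum_abs_div_sum_sub_div_sum (hu : ∀ i, 0 ≤ u i) (hv : ∀ i, 0 ≤ v i)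
    (huv : ∑ i, u i = ∑ i, v i) :
    (∑ i, u i) * ∑ i, |u i / (∑ j, u j) - v i / ∑ j, v j| = ∑ i, |u i - v i| := by
  rw [mul_sum]
  refine sum_congr rfl fun i _ ↦ ?_
  calc (∑ j, u j) * |u i / (∑ j, u j) - v i / ∑ j, v j|
      = |u i / (∑ j, u j) * (∑ j, u j) - v i / (∑ j, v j) * ∑ j, v j| := by
        rw [← huv, ← sub_mul, abs_mul, abs_of_nonneg (sum_nonneg fun j _ ↦ hu j), mul_comm]
    _ = |u i - v i| := by rw [div_sum_mul_sum hu, div_sum_mul_sum hv]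

end Conditional

section Sign

theorem abs_sgn (b : Bool) : |sgn b| = 1 := by
  cases b <;> simp [sgn]

theorem abs_sum_sgn_mul_le (u : Bool → ℝ) : |∑ a, sgn a * u a| ≤ ∑ a, |u a| := by
  simpa only [abs_mul, abs_sgn, one_mul] using abs_sum_le_sum_abs (fun a ↦ sgn a * u a) univ

theorem sgn_add_mul_add_sgn_sub_mul_le (b g : Bool) {s t r : ℝ} (hs : |s| ≤ r) (ht : |t| ≤ r) :
    (sgn g + sgn b) * s + (sgn g - sgn b) * t ≤ 2 * r := by
  obtain ⟨hs_neg, hs_le⟩ := abs_le.1 hs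
  obtain ⟨ht_neg, ht_le⟩ := abs_le.1 ht
  cases b <;> cases g <;> norm_num [sgn] <;> linarith

theorem sum_sgn_mul_ite (ε : ℝ) (b : Bool) :
    ∑ g, sgn g * (if g = b then 1 / 2 + ε else 1 / 2 - ε) = 2 * ε * sgn b := by
  cases b <;> simp [sgn] <;> ring

end Sign

variable {n m : ℕ}

section Correlator

variable {p r : Bool → Bool → Fin n → Fin m → ℝ}

theorem abs_corr_le_sum_abs (x : Fin n) (y : Fin m) : |corr p x y| ≤ ∑ a, ∑ b, |p a b x y| :=
  calc |corr p x y|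
      = |∑ a, sgn a * ∑ b, sgn b * p a b x y| := by simp only [corr, mul_sum, mul_assoc]
    _ ≤ ∑ a, |∑ b, sgn b * p a b x y| := abs_sum_sgn_mul_le _
    _ ≤ ∑ a, ∑ b, |p a b x y| := sum_le_sum fun a _ ↦ abs_sum_sgn_mul_le _

theorem abs_corr_sub_corr_le (x : Fin n) (y : Fin m) :
    |corr p x y - corr r x y| ≤ ∑ a, ∑ b, |p a b x y - r a b x y| := by
  have corr_sub : corr p x y - corr r x y = corr (fun a b x y ↦ p a b x y - r a b x y) x y := by
    simp only [corr, mul_sub, sum_sub_distrib]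
  exact corr_sub ▸ abs_corr_le_sum_abs x y

theorem IsNSBox.corr_le_one (hp : IsNSBox p) (x : Fin n) (y : Fin m) : corr p x y ≤ 1 :=
  calc corr p x y
      ≤ ∑ a, ∑ b, |p a b x y| := (le_abs_self _).trans (abs_corr_le_sum_abs x y)
    _ = ∑ a, ∑ b, p a b x y := by simp only [abs_of_nonneg (hp.1 _ _ _ _)]
    _ = 1 := hp.2.1 x y

end Correlator

section Marginals

/-- The box shared by Alice and Bob once Grace's output is discarded. -/
def forgetGrace (q : Bool → Bool → Bool → Fin n → Fin m → ℝ) :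
    Bool → Bool → Fin n → Fin m → ℝ :=
  fun a b x y ↦ ∑ g, q a b g x y

/-- The box shared by Alice and Grace once Bob's output is discarded. It keeps Bob's input `y` as an
argument, although no-signaling makes it independent of `y`. -/
def forgetBob (q : Bool → Bool → Bool → Fin n → Fin m → ℝ) :
    Bool → Bool → Fin n → Fin m → ℝ :=
  fun a g x y ↦ ∑ b, q a b g x y

variable {q : Bool → Bool → Bool → Fin n → Fin m → ℝ}

theorem IsNS3Box.isNSBox_forgetGrace (hq : IsNS3Box q) : IsNSBox (forgetGrace q) := by
  obtain ⟨nonneg, sum_eq_one, alice_grace, bob_grace⟩ := hq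
  refine ⟨fun a b x y ↦ sum_nonneg fun g _ ↦ nonneg a b g x y, sum_eq_one,
    fun a x y y' ↦ ?_, fun b y x x' ↦ ?_⟩
  · simp only [forgetGrace]
    rw [sum_comm, sum_congr rfl fun g _ ↦ alice_grace a g x y y', sum_comm]
  · simp only [forgetGrace]
    rw [sum_comm, sum_congr rfl fun g _ ↦ bob_grace b g y x x', sum_comm]

theorem IsNS3Box.corr_forgetBob_eq (hq : IsNS3Box q) (x : Fin n) (y y' : Fin m) :
    corr (forgetBob q) x y = corr (forgetBob q) x y' := by
  simp only [corr, forgetBob, hq.2.2.1 _ _ x y y']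

theorem corr_forgetBob_eq_sum (x : Fin n) (y : Fin m) :
    corr (forgetBob q) x y = ∑ b, ∑ g, sgn g * ∑ a, sgn a * q a b g x y := by
  simp only [corr, forgetBob, Fintype.sum_bool]
  ring

theorem corr_forgetGrace_eq_sum (x : Fin n) (y : Fin m) :
    corr (forgetGrace q) x y = ∑ b, ∑ g, sgn b * ∑ a, sgn a * q a b g x y := by
  simp only [corr, forgetGrace, Fintype.sum_bool]
  ring

theorem IsNS3Box.chsh_forgetBob_forgetGrace_le_two (hq : IsNS3Box q) (x₁ x₂ : Fin n) (y : Fin m) :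
    corr (forgetBob q) x₁ y + corr (forgetGrace q) x₁ y
      + corr (forgetBob q) x₂ y - corr (forgetGrace q) x₂ y ≤ 2 := by
  obtain ⟨nonneg, sum_eq_one, -, bob_grace⟩ := hq
  have abs_le_marginal (x : Fin n) (b g : Bool) :
      |∑ a, sgn a * q a b g x y| ≤ ∑ a, q a b g x₁ y := by
    refine (abs_sum_sgn_mul_le _).trans_eq ?_
    simp only [abs_of_nonneg (nonneg _ _ _ _ _), bob_grace b g y x x₁]
  calc corr (forgetBob q) x₁ y + corr (forgetGrace q) x₁ y
        + corr (forgetBob q) x₂ y - corr (forgetGrace q) x₂ y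
      = ∑ b, ∑ g, ((sgn g + sgn b) * ∑ a, sgn a * q a b g x₁ y
          + (sgn g - sgn b) * ∑ a, sgn a * q a b g x₂ y) := by
        simp only [corr_forgetBob_eq_sum, corr_forgetGrace_eq_sum, add_mul, sub_mul,
          sum_add_distrib, sum_sub_distrib]
        ring
    _ ≤ ∑ b, ∑ g, 2 * ∑ a, q a b g x₁ y :=
        sum_le_sum fun b _ ↦ sum_le_sum fun g _ ↦
          sgn_add_mul_add_sgn_sub_mul_le b g (abs_le_marginal x₁ b g) (abs_le_marginal x₂ b g)
    _ = 2 * ∑ a, ∑ b, ∑ g, q a b g x₁ y := by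
        simp only [Fintype.sum_bool]
        ring
    _ = 2 := by rw [sum_eq_one, mul_one]

end Marginals

section GentleMeasurement

/-- The tripartite box `q` implements a gentle measurement, with parameter `ε`, of Bob's observable
`y` in the box `p`: on input `y` it keeps Alice's marginal and the conditional distribution of Bob's
output, and Grace's output agrees with Bob's with conditional probability `1/2 + ε`. The conditional
distributions are constrained only where the conditioning event has positive probability. -/
structure IsGentleMeasurement (ε : ℝ) (p : Bool → Bool → Fin n → Fin m → ℝ)
    (q : Bool → Bool → Bool → Fin n → Fin m → ℝ) (y : Fin m) : Prop where
  alice_marginal : ∀ a x, ∑ b, forgetGrace q a b x y = ∑ b, p a b x y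
  bob_conditional : ∀ a x, 0 < ∑ b, p a b x y → ∀ b,
    forgetGrace q a b x y / ∑ b', forgetGrace q a b' x y = p a b x y / ∑ b', p a b' x y
  grace_conditional : ∀ a x b, 0 < forgetGrace q a b x y → ∀ g,
    q a b g x y / forgetGrace q a b x y = if g = b then 1 / 2 + ε else 1 / 2 - ε

variable {ε : ℝ} {p : Bool → Bool → Fin n → Fin m → ℝ}
  {q : Bool → Bool → Bool → Fin n → Fin m → ℝ} {y : Fin m}

theorem IsGentleMeasurement.forgetGrace_eq (h : IsGentleMeasurement ε p q y)
    (hp : ∀ a b x y, 0 ≤ p a b x y) (hq : ∀ a b g x y, 0 ≤ q a b g x y)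
    (a b : Bool) (x : Fin n) : forgetGrace q a b x y = p a b x y := by
  have hq_nonneg (b : Bool) : 0 ≤ forgetGrace q a b x y := sum_nonneg fun g _ ↦ hq a b g x y
  have hcond := h.bob_conditional a x
  rw [← h.alice_marginal a x] at hcond
  rw [eq_mul_sum_of_div_sum_eq hq_nonneg hcond b, h.alice_marginal a x,
    div_sum_mul_sum fun b ↦ hp a b x y]

theorem IsGentleMeasurement.corr_forgetBob (h : IsGentleMeasurement ε p q y)
    (hq : ∀ a b g x y, 0 ≤ q a b g x y) (x : Fin n) :
    corr (forgetBob q) x y = 2 * ε * corr (forgetGrace q) x y := by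
  have joint (a b g : Bool) :
      q a b g x y = (if g = b then 1 / 2 + ε else 1 / 2 - ε) * forgetGrace q a b x y :=
    eq_mul_sum_of_div_sum_eq (fun g ↦ hq a b g x y) (h.grace_conditional a x b) g
  calc corr (forgetBob q) x y
      = ∑ a, ∑ b, ∑ g, sgn a * (sgn g * q a b g x y) := by
        simp only [corr, forgetBob, Fintype.sum_bool]
        ring
    _ = ∑ a, ∑ b, sgn a * ((∑ g, sgn g * (if g = b then 1 / 2 + ε else 1 / 2 - ε))
          * forgetGrace q a b x y) := by
        simp only [joint, mul_sum, sum_mul, mul_assoc]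
    _ = 2 * ε * corr (forgetGrace q) x y := by
        simp only [sum_sgn_mul_ite, corr, mul_sum]
        exact sum_congr rfl fun a _ ↦ sum_congr rfl fun b _ ↦ by ring

end GentleMeasurement

section Disturbance

/-- The contribution of Alice's input `x` to the disturbance `D(B_y)` between the boxes `p` and `r`:
the `ℓ¹` distance between their distributions of Bob's output conditional on Alice's output,
averaged over the latter. Alice's marginal is taken at Bob's input `y`, and the weight of `x` is left
out. -/
noncomputable def disturbanceAt (p r : Bool → Bool → Fin n → Fin m → ℝ)
    (x : Fin n) (y : Fin m) : ℝ :=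
  ∑ a, (∑ b, p a b x y) *
    ∑ b, |p a b x y / (∑ b', p a b' x y) - r a b x y / ∑ b', r a b' x y|

theorem disturbanceAt_eq_sum_abs_sub {p r : Bool → Bool → Fin n → Fin m → ℝ}
    {x : Fin n} {y : Fin m} (hp : ∀ a b, 0 ≤ p a b x y) (hr : ∀ a b, 0 ≤ r a b x y)
    (hpr : ∀ a, ∑ b, p a b x y = ∑ b, r a b x y) :
    disturbanceAt p r x y = ∑ a, ∑ b, |p a b x y - r a b x y| :=
  sum_congr rfl fun a _ ↦ sum_mul_sum_abs_div_sum_sub_div_sum (hp a) (hr a) (hpr a)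

end Disturbance

theorem chsh_gain_disturbance_general {ε : ℝ} (hε : ε ≤ 1 / 2)
    {p : Bool → Bool → Fin n → Fin m → ℝ} (hp : ∀ a b x y, 0 ≤ p a b x y)
    (hp_alice : ∀ a x y y', ∑ b, p a b x y = ∑ b, p a b x y')
    {q : Bool → Bool → Bool → Fin n → Fin m → ℝ} (hq : IsNS3Box q) {y₁ : Fin m}
    (h : IsGentleMeasurement ε p q y₁) (x₁ x₂ : Fin n) (y₂ : Fin m) :
    2 * ε - 1 / 2 * (4 - (corr p x₁ y₁ + corr p x₁ y₂ + corr p x₂ y₁ - corr p x₂ y₂)) ≤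
      1 / 2 * (disturbanceAt p (forgetGrace q) x₁ y₂ + disturbanceAt p (forgetGrace q) x₂ y₂) := by
  have hr := hq.isNSBox_forgetGrace
  have corr_bob₁ (x : Fin n) : corr (forgetGrace q) x y₁ = corr p x y₁ := by
    simp only [corr, h.forgetGrace_eq hp hq.1]
  have corr_grace (x : Fin n) : corr (forgetBob q) x y₂ = 2 * ε * corr p x y₁ := by
    rw [hq.corr_forgetBob_eq x y₂ y₁, h.corr_forgetBob hq.1, corr_bob₁]
  have corr_bob₂ (x : Fin n) :
      |corr p x y₂ - corr (forgetGrace q) x y₂| ≤ disturbanceAt p (forgetGrace q) x y₂ := by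
    rw [disturbanceAt_eq_sum_abs_sub (fun a b ↦ hp a b x y₂) (fun a b ↦ hr.1 a b x y₂)]
    · exact abs_corr_sub_corr_le x y₂
    · intro a
      rw [hp_alice a x y₂ y₁, ← h.alice_marginal, hr.2.2.1 a x y₁ y₂]
  have scaled_corr_le (x : Fin n) : (1 - 2 * ε) * corr p x y₁ ≤ 1 - 2 * ε :=
    mul_le_of_le_one_right (by linarith) (corr_bob₁ x ▸ hr.corr_le_one x y₁)
  have local_bound := hq.chsh_forgetBob_forgetGrace_le_two x₁ x₂ y₂
  rw [corr_grace, corr_grace] at local_bound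
  linarith [(abs_le.1 (corr_bob₂ x₁)).2, (abs_le.1 (corr_bob₂ x₂)).1, scaled_corr_le x₁,
    scaled_corr_le x₂]

/-- Gentle measurement of `B₁` in the CHSH scenario: the disturbance of Bob's second
observable satisfies `D(B₂) ≥ 2ε − ½(4 − β_CHSH(p))`. -/
theorem chsh_gain_disturbance (ε : ℝ) (hε : ε ∈ Set.Icc (0 : ℝ) (1/2))
    (p : Bool → Bool → Fin 2 → Fin 2 → ℝ) (hp : IsNSBox p)
    (pt : Bool → Bool → Bool → Fin 2 → Fin 2 → ℝ) (hpt : IsNS3Box pt)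
    (hA : ∀ a x, (∑ b, ∑ g, pt a b g x 0) = ∑ b, p a b x 0)
    (hi : ∀ a x, 0 < (∑ b, p a b x 0) → ∀ b,
      (∑ g, pt a b g x 0) / (∑ b', ∑ g, pt a b' g x 0) =
        p a b x 0 / (∑ b', p a b' x 0))
    (hii : ∀ a x b, 0 < (∑ g, pt a b g x 0) → ∀ g,
      pt a b g x 0 / (∑ g', pt a b g' x 0) =
        if g = b then 1/2 + ε else 1/2 - ε) :
    (∑ x, (1/2 : ℝ) * ∑ a, (∑ b, p a b x 0) *
        ∑ b, |p a b x 1 / (∑ b', p a b' x 1) -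
          (∑ g, pt a b g x 1) / (∑ b', ∑ g, pt a b' g x 1)|) ≥
      2 * ε - (1/2) * (4 - chsh p) := by
  have h : IsGentleMeasurement ε p pt 0 := ⟨hA, hi, hii⟩
  have bound := chsh_gain_disturbance_general hε.2 hp.1 hp.2.2.1 hpt h 0 1 1
  simpa only [ge_iff_le, chsh, disturbanceAt, forgetGrace, Fin.sum_univ_two, mul_add,
    hp.2.2.1 _ _ 0 1] using bound
end
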